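/- arXiv:2207.00707 — 13 statements merged into one kernel-verified Lean document; each statement's English description precedes it below -/
import Mathlib

section
/- There exists a unique real number x such that cos x = x, and this unique fixed point lies in the open interval (0, 1). -/
/-- Every real fixed point of cosine lies in the open interval `(0, 1)`. -/
lemma mem_Ioo_of_cos_eq_self {x : ℝ} (hx : Real.cos x = x) : x ∈ Set.Ioo (0 : ℝ) 1 := by
  have hneg : -1 ≤ x := hx ▸ Real.neg_one_le_cos x
  have hle : x ≤ 1 := hx ▸ Real.cos_le_one x
  refine ⟨hx ▸ Real.cos_pos_of_le_one (abs_le.mpr ⟨hneg, hle⟩), lt_of_le_of_ne hle ?_⟩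
  rintro rfl
  linarith [Real.cos_one_le]

/-- There exists a unique real number `x` such that `cos x = x`, and this unique
fixed point (the Dottie number) lies in the open interval `(0, 1)`. -/
theorem dottie_exists_unique_and_mem_Ioo :
    (∃! x : ℝ, Real.cos x = x) ∧
    ∀ x : ℝ, Real.cos x = x → x ∈ Set.Ioo (0 : ℝ) 1 := by
  refine ⟨existsUnique_of_exists_of_unique ?_ ?_, fun x hx => mem_Ioo_of_cos_eq_self hx⟩
  · have hcont : ContinuousOn (fun x : ℝ => x - Real.cos x) (Set.Icc 0 1) := by fun_prop
    have hzero : (0 : ℝ) ∈ Set.Icc ((0 : ℝ) - Real.cos 0) (1 - Real.cos 1) :=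
      ⟨by simp, by linarith [Real.cos_le_one 1]⟩
    obtain ⟨x, -, hx⟩ := intermediate_value_Icc zero_le_one hcont hzero
    exact ⟨x, (sub_eq_zero.mp hx).symm⟩
  · intro x y hx hy
    have hxI := mem_Ioo_of_cos_eq_self hx
    have hyI := mem_Ioo_of_cos_eq_self hy
    have hpi := Real.pi_gt_three
    rcases lt_trichotomy x y with h | h | h
    · have := Real.cos_lt_cos_of_nonneg_of_le_pi hxI.1.le (by linarith [hyI.2]) h
      linarith
    · exact h
    · have := Real.cos_lt_cos_of_nonneg_of_le_pi hyI.1.le (by linarith [hxI.2]) h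
      linarith
end

section
/- Let d be the unique real number with cos d = d. Then for every real starting value x₀, the sequence of iterates n ↦ cos^[n] x₀ (the n-fold composition of cos applied to x₀) converges to d. -/
/-- On `[-1, 1]` the cosine is Lipschitz with constant `sin 1`. -/
lemma abs_cos_sub_cos_le_sin_one_mul {x y : ℝ} (hx : x ∈ Set.Icc (-1 : ℝ) 1)
    (hy : y ∈ Set.Icc (-1 : ℝ) 1) :
    |Real.cos y - Real.cos x| ≤ Real.sin 1 * |y - x| := by
  refine (convex_Icc (-1 : ℝ) 1).norm_image_sub_le_of_norm_deriv_le
    (fun z _ => Real.differentiableAt_cos) (fun z hz => ?_) hx hy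
  have hpi := Real.pi_gt_three
  rw [Real.deriv_cos, norm_neg, Real.norm_eq_abs, abs_le, ← Real.sin_neg]
  exact ⟨Real.sin_le_sin_of_le_of_le_pi_div_two (by linarith) (by linarith [hz.2]) hz.1,
    Real.sin_le_sin_of_le_of_le_pi_div_two (by linarith [hz.1]) (by linarith) hz.2⟩

lemma sin_one_nonneg : 0 ≤ Real.sin 1 :=
  Real.sin_nonneg_of_nonneg_of_le_pi zero_le_one (by linarith [Real.pi_gt_three])

lemma sin_one_lt_one : Real.sin 1 < 1 := by
  have hpi := Real.pi_gt_three
  have hlt : Real.sin 1 < Real.sin (Real.pi / 2) :=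
    Real.sin_lt_sin_of_lt_of_le_pi_div_two (by linarith) le_rfl (by linarith)
  rwa [Real.sin_pi_div_two] at hlt

/-- The iterates of the cosine approach a fixed point geometrically, with ratio `sin 1`. -/
lemma abs_cos_iterate_succ_sub_le {d : ℝ} (hd : Real.cos d = d) (x : ℝ) (n : ℕ) :
    |Real.cos^[n + 1] x - d| ≤ Real.sin 1 ^ n * |Real.cos x - d| := by
  induction n with
  | zero => simp
  | succ n ih =>
    have hmem : Real.cos^[n + 1] x ∈ Set.Icc (-1 : ℝ) 1 := by
      rw [Function.iterate_succ_apply']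
      exact Real.cos_mem_Icc _
    have hdmem : d ∈ Set.Icc (-1 : ℝ) 1 := hd ▸ Real.cos_mem_Icc d
    have hsin := sin_one_nonneg
    calc |Real.cos^[n + 1 + 1] x - d|
        = |Real.cos (Real.cos^[n + 1] x) - Real.cos d| := by
          rw [Function.iterate_succ_apply' _ (n + 1), hd]
      _ ≤ Real.sin 1 * |Real.cos^[n + 1] x - d| := abs_cos_sub_cos_le_sin_one_mul hdmem hmem
      _ ≤ Real.sin 1 * (Real.sin 1 ^ n * |Real.cos x - d|) := by gcongr
      _ = Real.sin 1 ^ (n + 1) * |Real.cos x - d| := by ring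

/-- Let `d` be the unique real number with `cos d = d`.  Then for every real
starting value `x₀`, the sequence of iterates `n ↦ cos^[n] x₀` converges to `d`. -/
theorem cos_iterates_tendsto_dottie (d : ℝ) (hd : Real.cos d = d)
    (huniq : ∀ y : ℝ, Real.cos y = y → y = d) (x₀ : ℝ) :
    Filter.Tendsto (fun n : ℕ => Real.cos^[n] x₀) Filter.atTop (nhds d) := by
  rw [← Filter.tendsto_add_atTop_iff_nat 1, tendsto_iff_norm_sub_tendsto_zero]
  refine squeeze_zero (fun n => norm_nonneg _) (abs_cos_iterate_succ_sub_le hd x₀) ?_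
  simpa using (tendsto_pow_atTop_nhds_zero_of_lt_one sin_one_nonneg sin_one_lt_one).mul_const
    |Real.cos x₀ - d|
end

section
/- There exists a unique a in the open interval (π/2, π) such that a · sin a + cos a = 0 (i.e., a is the least positive critical point of the spherical Bessel function y₀(x) = -cos x / x); the function x ↦ -cos x / x is strictly monotone increasing on the interval (0, a]; there is a unique x in (0, a) with -cos x / x = -1; and this unique x satisfies cos x = x, i.e., it is the Dottie number. -/
open Real Set

theorem strictAntiOn_mul_sin_add_cos :
    StrictAntiOn (fun x : ℝ => x * Real.sin x + Real.cos x) (Set.Icc (π / 2) π) := by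
  refine strictAntiOn_of_deriv_neg (convex_Icc _ _) (by fun_prop) fun x hx => ?_
  rw [interior_Icc] at hx
  have hd : HasDerivAt (fun x : ℝ => x * Real.sin x + Real.cos x) (x * Real.cos x) x :=
    (((hasDerivAt_id' x).mul (Real.hasDerivAt_sin x)).add
      (Real.hasDerivAt_cos x)).congr_deriv (by ring)
  rw [hd.deriv]
  exact mul_neg_of_pos_of_neg (by linarith [hx.1, Real.pi_pos])
    (Real.cos_neg_of_pi_div_two_lt_of_lt hx.1 (by linarith [hx.2, Real.pi_pos]))

theorem mul_sin_add_cos_pos {a x : ℝ} (ha : a ∈ Set.Ioo (π / 2) π)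
    (h : a * Real.sin a + Real.cos a = 0) (hx : x ∈ Set.Ioo 0 a) :
    0 < x * Real.sin x + Real.cos x := by
  rcases le_total x (π / 2) with hle | hle
  · have hsin := Real.sin_pos_of_pos_of_lt_pi hx.1 (hx.2.trans ha.2)
    have hcos := Real.cos_nonneg_of_neg_pi_div_two_le_of_le
      (by linarith [hx.1, Real.pi_pos]) hle
    linarith [mul_pos hx.1 hsin]
  · exact h.symm.trans_lt (strictAntiOn_mul_sin_add_cos ⟨hle, (hx.2.trans ha.2).le⟩
      (Set.Ioo_subset_Icc_self ha) hx.2)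

theorem strictMonoOn_neg_cos_div {a : ℝ} (ha : a ∈ Set.Ioo (π / 2) π)
    (h : a * Real.sin a + Real.cos a = 0) :
    StrictMonoOn (fun x : ℝ => -Real.cos x / x) (Set.Ioc 0 a) := by
  refine strictMonoOn_of_deriv_pos (convex_Ioc _ _)
    (Real.continuous_cos.neg.continuousOn.div continuousOn_id fun x hx => hx.1.ne')
    fun x hx => ?_
  rw [interior_Ioc] at hx
  have hd : HasDerivAt (fun x : ℝ => -Real.cos x / x)
      ((x * Real.sin x + Real.cos x) / x ^ 2) x :=
    ((Real.hasDerivAt_cos x).neg.div (hasDerivAt_id' x) hx.1.ne').congr_deriv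
      (by simp only [Pi.neg_apply]; ring)
  rw [hd.deriv]
  exact div_pos (mul_sin_add_cos_pos ha h hx) (pow_pos hx.1 2)

theorem neg_cos_div_eq_neg_one_iff {x : ℝ} (hx : x ≠ 0) :
    -Real.cos x / x = -1 ↔ Real.cos x = x := by
  rw [div_eq_iff hx, neg_one_mul, neg_inj]

theorem exists_cos_eq_self : ∃ x ∈ Set.Ioo 0 (π / 2), Real.cos x = x := by
  obtain ⟨x, hx, hfx⟩ := intermediate_value_Ioo' (f := fun x : ℝ => Real.cos x - x)
    (by positivity : (0 : ℝ) ≤ π / 2) (by fun_prop)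
    (show (0 : ℝ) ∈ _ by simp [Real.pi_pos])
  exact ⟨x, hx, sub_eq_zero.mp hfx⟩

/-- There is a unique `a ∈ (π/2, π)` with `a·sin a + cos a = 0` (the least positive
critical point of `y₀(x) = -cos x / x`); the function `x ↦ -cos x / x` is strictly
monotone increasing on `(0, a]`; there is a unique `x ∈ (0, a)` with `-cos x / x = -1`;
and this unique `x` satisfies `cos x = x`, i.e. it is the Dottie number. -/
theorem dottie_is_inverse_one_y0_neg_one :
    (∃! a : ℝ, a ∈ Set.Ioo (π / 2) π ∧ a * Real.sin a + Real.cos a = 0) ∧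
    ∀ a : ℝ, a ∈ Set.Ioo (π / 2) π → a * Real.sin a + Real.cos a = 0 →
      StrictMonoOn (fun x : ℝ => -Real.cos x / x) (Set.Ioc 0 a) ∧
      (∃! x : ℝ, x ∈ Set.Ioo 0 a ∧ -Real.cos x / x = -1) ∧
      (∀ x : ℝ, x ∈ Set.Ioo 0 a → -Real.cos x / x = -1 → Real.cos x = x) := by
  refine ⟨?_, fun a ha h => ⟨strictMonoOn_neg_cos_div ha h, ?_, fun x hx =>
    (neg_cos_div_eq_neg_one_iff hx.1.ne').mp⟩⟩
  · obtain ⟨a, ha, hfa⟩ := intermediate_value_Ioo'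
      (f := fun x : ℝ => x * Real.sin x + Real.cos x)
      (by linarith [Real.pi_pos] : π / 2 ≤ π) (by fun_prop)
      (show (0 : ℝ) ∈ _ by simp [Real.pi_pos])
    exact ⟨a, ⟨ha, hfa⟩, fun b hb => strictAntiOn_mul_sin_add_cos.injOn
      (Set.Ioo_subset_Icc_self hb.1) (Set.Ioo_subset_Icc_self ha) (hb.2.trans hfa.symm)⟩
  · obtain ⟨x, hx, hcos⟩ := exists_cos_eq_self
    have hxa : x ∈ Set.Ioo 0 a := ⟨hx.1, hx.2.trans ha.1⟩
    have hval := (neg_cos_div_eq_neg_one_iff hx.1.ne').mpr hcos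
    exact ⟨x, ⟨hxa, hval⟩, fun y hy => (strictMonoOn_neg_cos_div ha h).injOn
      (Set.Ioo_subset_Ioc_self hy.1) (Set.Ioo_subset_Ioc_self hxa) (hy.2.trans hval.symm)⟩
end

section
/- For every natural number n and every real x ≠ 0, the function Y n satisfies the spherical Bessel differential equation: x² · (deriv (deriv (Y n))) x + 2·x · (deriv (Y n)) x + (x² - n·(n+1)) · Y n x = 0. -/
/-- The spherical Bessel functions of the second kind `y_n`, defined via the
closed forms of `y₀`, `y₁` and the standard recurrence. -/
noncomputable def Y : ℕ → ℝ → ℝ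
  | 0, x => -Real.cos x / x
  | 1, x => -Real.cos x / x ^ 2 - Real.sin x / x
  | (n + 2), x => ((2 * ((n : ℝ) + 1) + 1) / x) * Y (n + 1) x - Y n x

theorem Y_add_two (n : ℕ) (x : ℝ) :
    Y (n + 2) x = ((2 * ((n : ℝ) + 1) + 1) / x) * Y (n + 1) x - Y n x := by
  rw [Y]

/-- The ladder relations expressing the derivatives of `Y n` and `Y (n + 1)` through
each other. -/
theorem Y_hasDerivAt_pair (n : ℕ) {x : ℝ} (hx : x ≠ 0) :
    HasDerivAt (Y n) ((n : ℝ) / x * Y n x - Y (n + 1) x) x ∧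
      HasDerivAt (Y (n + 1)) (Y n x - ((n : ℝ) + 2) / x * Y (n + 1) x) x := by
  induction n with
  | zero =>
    have h0 : Y 0 = fun x => -Real.cos x / x := by funext t; rw [Y]
    have h1 : Y (0 + 1) = fun x => -Real.cos x / x ^ 2 - Real.sin x / x := by
      funext t; rw [Y]
    rw [h0, h1]
    constructor
    · refine ((Real.hasDerivAt_cos x).fun_neg.fun_div (hasDerivAt_id' x) hx).congr_deriv ?_
      push_cast
      field_simp
      ring
    · refine (((Real.hasDerivAt_cos x).fun_neg.fun_div (hasDerivAt_pow 2 x)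
        (pow_ne_zero 2 hx)).fun_sub
        ((Real.hasDerivAt_sin x).fun_div (hasDerivAt_id' x) hx)).congr_deriv ?_
      push_cast
      field_simp
      ring
  | succ n ih =>
    obtain ⟨hn, hn1⟩ := ih
    have hY : Y (n + 1 + 1) =
        fun t => ((2 * ((n : ℝ) + 1) + 1) / t) * Y (n + 1) t - Y n t :=
      funext (Y_add_two n)
    rw [hY]
    constructor
    · refine hn1.congr_deriv ?_
      push_cast
      field_simp
      ring
    · refine ((((hasDerivAt_const x (2 * ((n : ℝ) + 1) + 1)).fun_div
        (hasDerivAt_id' x) hx).fun_mul hn1).fun_sub hn).congr_deriv ?_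
      push_cast
      field_simp
      ring

/-- For every natural number `n` and every real `x ≠ 0`, `Y n` satisfies the
spherical Bessel differential equation
`x² y'' + 2 x y' + (x² - n(n+1)) y = 0`. -/
theorem Y_satisfies_spherical_bessel_ODE (n : ℕ) (x : ℝ) (hx : x ≠ 0) :
    x ^ 2 * (deriv (deriv (Y n))) x + 2 * x * (deriv (Y n)) x +
      (x ^ 2 - (n : ℝ) * ((n : ℝ) + 1)) * Y n x = 0 := by
  obtain ⟨hn, hn1⟩ := Y_hasDerivAt_pair n hx
  have hderiv : deriv (Y n) =ᶠ[nhds x] fun t => (n : ℝ) / t * Y n t - Y (n + 1) t := by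
    filter_upwards [isOpen_ne.mem_nhds hx] with t ht
    exact (Y_hasDerivAt_pair n ht).1.deriv
  have hderiv2 := (((hasDerivAt_const x (n : ℝ)).fun_div
    (hasDerivAt_id' x) hx).fun_mul hn).fun_sub hn1
  rw [hderiv.deriv_eq, hderiv2.deriv, hn.deriv]
  field_simp
  ring
end

section
/- For every natural number n and every real x ≠ 0, the function J n satisfies the spherical Bessel differential equation: x² · (deriv (deriv (J n))) x + 2·x · (deriv (J n)) x + (x² - n·(n+1)) · J n x = 0. -/
/-- The spherical Bessel functions of the first kind `j_n`, defined via the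
closed forms of `j₀`, `j₁` and the standard recurrence. -/
noncomputable def J : ℕ → ℝ → ℝ
  | 0, x => Real.sin x / x
  | 1, x => Real.sin x / x ^ 2 - Real.cos x / x
  | (n + 2), x => ((2 * ((n : ℝ) + 1) + 1) / x) * J (n + 1) x - J n x

/-- The raising and lowering relations for the derivatives of consecutive spherical Bessel
functions. -/
theorem hasDerivAt_J_and_succ (n : ℕ) {x : ℝ} (hx : x ≠ 0) :
    HasDerivAt (J n) (n / x * J n x - J (n + 1) x) x ∧
      HasDerivAt (J (n + 1)) (J n x - (n + 2) / x * J (n + 1) x) x := by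
  induction n with
  | zero =>
    have h0 : J 0 = fun y => Real.sin y / y := by funext y; rw [J]
    have h1 : J 1 = fun y => Real.sin y / y ^ 2 - Real.cos y / y := by funext y; rw [J]
    rw [zero_add, h0, h1]
    constructor
    · refine ((Real.hasDerivAt_sin x).div (hasDerivAt_id' x) hx).congr_deriv ?_
      push_cast
      field_simp
      ring
    · refine (((Real.hasDerivAt_sin x).div (hasDerivAt_pow 2 x) (pow_ne_zero 2 hx)).sub
        ((Real.hasDerivAt_cos x).div (hasDerivAt_id' x) hx)).congr_deriv ?_
      push_cast
      field_simp
      ring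
  | succ n ih =>
    obtain ⟨hn, hn'⟩ := ih
    have hrec : J (n + 2) = fun y => (2 * ((n : ℝ) + 1) + 1) / y * J (n + 1) y - J n y := by
      funext y; rw [J]
    constructor
    · convert hn' using 1
      rw [hrec]
      push_cast
      field_simp
      ring
    · rw [show n + 1 + 1 = n + 2 from rfl, hrec]
      refine ((((hasDerivAt_const x (2 * ((n : ℝ) + 1) + 1)).div
        (hasDerivAt_id' x) hx).mul hn').sub hn).congr_deriv ?_
      simp only [Pi.div_apply]
      push_cast
      field_simp
      ring

/-- For every natural number `n` and every real `x ≠ 0`, `J n` satisfies the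
spherical Bessel differential equation
`x² y'' + 2 x y' + (x² - n(n+1)) y = 0`. -/
theorem J_satisfies_spherical_bessel_ODE (n : ℕ) (x : ℝ) (hx : x ≠ 0) :
    x ^ 2 * (deriv (deriv (J n))) x + 2 * x * (deriv (J n)) x +
      (x ^ 2 - (n : ℝ) * ((n : ℝ) + 1)) * J n x = 0 := by
  obtain ⟨hn, hn'⟩ := hasDerivAt_J_and_succ n hx
  have hderiv : deriv (J n) =ᶠ[nhds x] fun y => n / y * J n y - J (n + 1) y := by
    filter_upwards [isOpen_ne.mem_nhds hx] with y hy
    exact (hasDerivAt_J_and_succ n hy).1.deriv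
  have hderiv2 := (((hasDerivAt_const x (n : ℝ)).div (hasDerivAt_id' x) hx).mul hn).sub hn'
  rw [(hderiv2.congr_of_eventuallyEq hderiv).deriv, hn.deriv]
  simp only [Pi.div_apply]
  field_simp
  ring
end

section
/- For every natural number n and every real x ≠ 0, the function I n satisfies the modified spherical Bessel differential equation: x² · (deriv (deriv (I n))) x + 2·x · (deriv (I n)) x - (x² + n·(n+1)) · I n x = 0. -/
/-- The modified spherical Bessel functions of the first kind `i_n`, defined via
the closed forms of `i₀`, `i₁` and the standard recurrence. -/
noncomputable def I : ℕ → ℝ → ℝ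
  | 0, x => Real.sinh x / x
  | 1, x => Real.cosh x / x - Real.sinh x / x ^ 2
  | (n + 2), x => I n x - ((2 * ((n : ℝ) + 1) + 1) / x) * I (n + 1) x

/-- The raising and lowering relations for the derivatives of `I n` and `I (n + 1)`. -/
theorem hasDerivAt_I_and_I_succ (n : ℕ) {x : ℝ} (hx : x ≠ 0) :
    HasDerivAt (I n) (I (n + 1) x + n / x * I n x) x ∧
      HasDerivAt (I (n + 1)) (I n x - (n + 2) / x * I (n + 1) x) x := by
  induction n with
  | zero =>
    have h0 : I 0 = fun y => Real.sinh y / y := by funext y; rw [I]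
    have h1 : I 1 = fun y => Real.cosh y / y - Real.sinh y / y ^ 2 := by funext y; rw [I]
    have hs := Real.hasDerivAt_sinh x
    have hc := Real.hasDerivAt_cosh x
    constructor
    · rw [zero_add, h0, h1]
      refine (hs.fun_div (hasDerivAt_id' x) hx).congr_deriv ?_
      push_cast
      field_simp
      ring
    · rw [zero_add, h0, h1]
      refine ((hc.fun_div (hasDerivAt_id' x) hx).fun_sub
        (hs.fun_div (hasDerivAt_pow 2 x) (pow_ne_zero 2 hx))).congr_deriv ?_
      push_cast
      field_simp
      ring
  | succ n ih =>
    obtain ⟨hn, hn1⟩ := ih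
    have hrec : I (n + 2) = fun y => I n y - (2 * ((n : ℝ) + 1) + 1) / y * I (n + 1) y := by
      funext y; rw [I]
    constructor
    · refine hn1.congr_deriv ?_
      rw [hrec]
      push_cast
      field_simp
      ring
    · have hq := (hasDerivAt_const x (2 * ((n : ℝ) + 1) + 1)).fun_div (hasDerivAt_id' x) hx
      rw [show n + 1 + 1 = n + 2 from rfl, hrec]
      refine (hn.fun_sub (hq.fun_mul hn1)).congr_deriv ?_
      push_cast
      field_simp
      ring

/-- For every natural number `n` and every real `x ≠ 0`, `I n` satisfies the
modified spherical Bessel differential equation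
`x² y'' + 2 x y' - (x² + n(n+1)) y = 0`. -/
theorem I_satisfies_modified_spherical_bessel_ODE (n : ℕ) (x : ℝ) (hx : x ≠ 0) :
    x ^ 2 * (deriv (deriv (I n))) x + 2 * x * (deriv (I n)) x -
      (x ^ 2 + (n : ℝ) * ((n : ℝ) + 1)) * I n x = 0 := by
  obtain ⟨hn, hn1⟩ := hasDerivAt_I_and_I_succ n hx
  have hderiv : deriv (I n) =ᶠ[nhds x] fun y => I (n + 1) y + n / y * I n y := by
    filter_upwards [isOpen_ne.mem_nhds hx] with y hy
    exact (hasDerivAt_I_and_I_succ n hy).1.deriv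
  have hq := (hasDerivAt_const x (n : ℝ)).fun_div (hasDerivAt_id' x) hx
  rw [hderiv.deriv_eq, (hn1.fun_add (hq.fun_mul hn)).deriv, hn.deriv]
  field_simp
  ring
end

section
/- For every natural number n and every real x ≠ 0, the function K n satisfies the modified spherical Bessel differential equation: x² · (deriv (deriv (K n))) x + 2·x · (deriv (K n)) x - (x² + n·(n+1)) · K n x = 0. -/
/-- The modified spherical Bessel functions of the second kind `k_n`, defined via
the closed forms of `k₀`, `k₁` and the standard recurrence. -/
noncomputable def K : ℕ → ℝ → ℝ
  | 0, x => Real.exp (-x) / x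
  | 1, x => (1 / x ^ 2 + 1 / x) * Real.exp (-x)
  | (n + 2), x => K n x + ((2 * (n : ℝ) + 3) / x) * K (n + 1) x

theorem K_add_two (n : ℕ) (x : ℝ) :
    K (n + 2) x = K n x + ((2 * (n : ℝ) + 3) / x) * K (n + 1) x := by
  rw [K]

/-- The two first-order ladder relations, lowering and raising the index. -/
theorem hasDerivAt_K_and_succ (n : ℕ) {x : ℝ} (hx : x ≠ 0) :
    HasDerivAt (K n) (-K (n + 1) x + (n : ℝ) / x * K n x) x ∧
      HasDerivAt (K (n + 1)) (-K n x - ((n : ℝ) + 2) / x * K (n + 1) x) x := by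
  induction n with
  | zero =>
    have hexp : HasDerivAt (fun y : ℝ => Real.exp (-y)) (-Real.exp (-x)) x := by
      simpa using (hasDerivAt_neg x).exp
    have hK0 : K 0 = fun y => Real.exp (-y) / y := by funext y; rw [K]
    have hK1 : K 1 = fun y => (1 / y ^ 2 + 1 / y) * Real.exp (-y) := by funext y; rw [K]
    rw [zero_add, hK0, hK1]
    constructor
    · refine (hexp.fun_div (hasDerivAt_id' x) hx).congr_deriv ?_
      field_simp
      push_cast
      ring
    · refine ((((hasDerivAt_const x (1 : ℝ)).fun_div (hasDerivAt_pow 2 x)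
        (pow_ne_zero 2 hx)).fun_add
        ((hasDerivAt_const x (1 : ℝ)).fun_div (hasDerivAt_id' x) hx)).fun_mul
        hexp).congr_deriv ?_
      field_simp
      push_cast
      ring
  | succ n ih =>
    obtain ⟨h₀, h₁⟩ := ih
    constructor
    · refine h₁.congr_deriv ?_
      rw [K_add_two]
      push_cast
      field_simp
      ring
    · have hK : K (n + 1 + 1) = fun y => K n y + ((2 * (n : ℝ) + 3) / y) * K (n + 1) y :=
        funext (K_add_two n)
      rw [hK]
      refine (h₀.fun_add (((hasDerivAt_const x (2 * (n : ℝ) + 3)).fun_div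
        (hasDerivAt_id' x) hx).fun_mul h₁)).congr_deriv ?_
      push_cast
      field_simp
      ring

theorem deriv_K (n : ℕ) {x : ℝ} (hx : x ≠ 0) :
    deriv (K n) x = -K (n + 1) x + (n : ℝ) / x * K n x :=
  (hasDerivAt_K_and_succ n hx).1.deriv

/-- For every natural number `n` and every real `x ≠ 0`, `K n` satisfies the
modified spherical Bessel differential equation
`x² y'' + 2 x y' - (x² + n(n+1)) y = 0`. -/
theorem K_satisfies_modified_spherical_bessel_ODE (n : ℕ) (x : ℝ) (hx : x ≠ 0) :
    x ^ 2 * (deriv (deriv (K n))) x + 2 * x * (deriv (K n)) x -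
      (x ^ 2 + (n : ℝ) * ((n : ℝ) + 1)) * K n x = 0 := by
  obtain ⟨h₀, h₁⟩ := hasDerivAt_K_and_succ n hx
  have hderiv : deriv (K n) =ᶠ[nhds x] fun y => -K (n + 1) y + (n : ℝ) / y * K n y := by
    filter_upwards [isOpen_ne.mem_nhds hx] with y hy using deriv_K n hy
  have hsnd := h₁.fun_neg.fun_add
    (((hasDerivAt_const x (n : ℝ)).fun_div (hasDerivAt_id' x) hx).fun_mul h₀)
  rw [hderiv.deriv_eq, hsnd.deriv, deriv_K n hx]
  field_simp
  ring
end

section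
/- Define R : ℕ → ℝ → ℝ by R 0 x = cos x / x and R (n+1) x = (deriv (R n)) x / x. Then for every natural number n and every real x ≠ 0, Y n x = -(-x)^n · R n x (Lord Rayleigh's formula y_n(x) = -(-x)^n ((1/x) d/dx)^n (cos x / x)). -/
/-- The iterated operator `((1/x) d/dx)^n` applied to `cos x / x`. -/
noncomputable def R : ℕ → ℝ → ℝ
  | 0, x => Real.cos x / x
  | (n + 1), x => (deriv (R n)) x / x

theorem R_succ (n : ℕ) (x : ℝ) : R (n + 1) x = deriv (R n) x / x := by
  simp [R]

theorem analyticAt_R (n : ℕ) {x : ℝ} (hx : x ≠ 0) : AnalyticAt ℝ (R n) x := by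
  induction n with
  | zero =>
    have h : R 0 = fun x => Real.cos x / x := by ext x; simp [R]
    rw [h]
    exact Real.analyticAt_cos.div analyticAt_id hx
  | succ n ih =>
    have h : R (n + 1) = fun x => deriv (R n) x / x := funext (R_succ n)
    rw [h]
    exact ih.deriv.div analyticAt_id hx

theorem hasDerivAt_R (n : ℕ) {x : ℝ} (hx : x ≠ 0) :
    HasDerivAt (R n) (x * R (n + 1) x) x := by
  rw [R_succ, mul_div_cancel₀ _ hx]
  exact (analyticAt_R n hx).differentiableAt.hasDerivAt

theorem R_one {x : ℝ} (hx : x ≠ 0) :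
    R 1 x = (-Real.sin x * x - Real.cos x) / x ^ 3 := by
  have h : R 0 = Real.cos / id := by ext x; simp [R]
  have hd := (Real.hasDerivAt_cos x).div (hasDerivAt_id x) hx
  have he := (hasDerivAt_R 0 hx).unique (h ▸ hd)
  simp only [id, zero_add, mul_one] at he
  field_simp at he ⊢
  linear_combination he

theorem R_recurrence (n : ℕ) {x : ℝ} (hx : x ≠ 0) :
    x ^ 2 * R (n + 2) x + (2 * n + 3) * R (n + 1) x + R n x = 0 := by
  induction n generalizing x with
  | zero =>
    have hev : R 1 =ᶠ[nhds x] fun x => (-Real.sin x * x - Real.cos x) / x ^ 3 := by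
      filter_upwards [isOpen_ne.mem_nhds hx] with y hy using R_one hy
    have hd := ((((Real.hasDerivAt_sin x).neg.mul (hasDerivAt_id x)).sub
      (Real.hasDerivAt_cos x)).div (hasDerivAt_pow 3 x) (pow_ne_zero 3 hx)).congr_of_eventuallyEq
      hev
    have he := (hasDerivAt_R 1 hx).unique hd
    have h0 : R 0 x = Real.cos x / x := by simp [R]
    simp only [Nat.cast_zero, zero_add, R_one hx, h0]
    simp at he
    field_simp at he ⊢
    linear_combination he
  | succ n ih =>
    have hev : (fun y => y ^ 2 * R (n + 2) y + (2 * n + 3) * R (n + 1) y + R n y)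
        =ᶠ[nhds x] fun _ => 0 := by
      filter_upwards [isOpen_ne.mem_nhds hx] with y hy using ih hy
    have hd := (((hasDerivAt_pow 2 x).mul (hasDerivAt_R (n + 2) hx)).add
      ((hasDerivAt_R (n + 1) hx).const_mul (2 * (n : ℝ) + 3))).add (hasDerivAt_R n hx)
    have he := hd.unique ((hasDerivAt_const x (0 : ℝ)).congr_of_eventuallyEq hev)
    apply mul_left_cancel₀ hx
    push_cast at he ⊢
    linear_combination he

/-- Lord Rayleigh's formula: `y_n(x) = -(-x)^n ((1/x) d/dx)^n (cos x / x)`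
for every natural number `n` and every real `x ≠ 0`. -/
theorem Y_eq_rayleigh_formula (n : ℕ) (x : ℝ) (hx : x ≠ 0) :
    Y n x = -(-x) ^ n * R n x := by
  induction n using Nat.twoStepInduction with
  | zero => simp [Y, R, neg_div]
  | one =>
    rw [R_one hx, Y]
    field_simp
    ring
  | more n ih₀ ih₁ =>
    rw [Y, ih₀, ih₁]
    field_simp
    linear_combination (-x) ^ n * x * R_recurrence n hx
end

section
/- For every natural number n there exists an integer sequence c : ℕ → ℤ with c ℓ > 0 for all 1 ≤ ℓ ≤ n+1, with c 1 = 1 and leading coefficient c (n+1) = (2n)! / (2^n · n!) (the double factorial (2n-1)!!), such that for all real x ≠ 0, K n x = (∑_{ℓ=1}^{n+1} (c ℓ) / x^ℓ) · exp(-x). -/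
/-- The coefficient of `x⁻ˡ` in the Laurent polynomial `k_n(x) · exp x`. -/
def laurentCoeff : ℕ → ℕ → ℕ
  | _, 0 => 0
  | 0, ℓ + 1 => if ℓ = 0 then 1 else 0
  | 1, ℓ + 1 => if ℓ ≤ 1 then 1 else 0
  | n + 2, ℓ + 1 => laurentCoeff n (ℓ + 1) + (2 * n + 3) * laurentCoeff (n + 1) ℓ

lemma laurentCoeff_zero_right (n : ℕ) : laurentCoeff n 0 = 0 := by
  simp [laurentCoeff]

lemma laurentCoeff_add_two_succ (n ℓ : ℕ) :
    laurentCoeff (n + 2) (ℓ + 1) =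
      laurentCoeff n (ℓ + 1) + (2 * n + 3) * laurentCoeff (n + 1) ℓ := by
  rw [laurentCoeff]

lemma laurentCoeff_one_right (n : ℕ) : laurentCoeff n 1 = 1 := by
  induction n using Nat.twoStepInduction with
  | zero => simp [laurentCoeff]
  | one => simp [laurentCoeff]
  | more n ih _ => rw [laurentCoeff_add_two_succ, laurentCoeff_zero_right, ih, mul_zero, add_zero]

lemma laurentCoeff_eq_zero_of_lt (n : ℕ) :
    ∀ ℓ, n + 1 < ℓ → laurentCoeff n ℓ = 0 := by
  induction n using Nat.twoStepInduction with
  | zero =>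
    rintro (_ | ℓ) h
    · omega
    · simp only [laurentCoeff]
      exact if_neg (by omega)
  | one =>
    rintro (_ | ℓ) h
    · omega
    · simp only [laurentCoeff]
      exact if_neg (by omega)
  | more n ih₀ ih₁ =>
    rintro (_ | ℓ) h
    · omega
    · rw [laurentCoeff_add_two_succ, ih₀ _ (by omega), ih₁ _ (by omega), mul_zero, add_zero]

lemma laurentCoeff_pos (n : ℕ) :
    ∀ ℓ, 1 ≤ ℓ → ℓ ≤ n + 1 → 0 < laurentCoeff n ℓ := by
  induction n using Nat.twoStepInduction with
  | zero =>
    intro ℓ h₁ h₂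
    obtain rfl : ℓ = 1 := by omega
    simp [laurentCoeff]
  | one =>
    intro ℓ h₁ h₂
    interval_cases ℓ <;> simp [laurentCoeff]
  | more n _ ih =>
    rintro (_ | _ | ℓ) h₁ h₂
    · omega
    · simp [laurentCoeff_one_right]
    · have := ih (ℓ + 1) (by omega) (by omega)
      rw [laurentCoeff_add_two_succ]
      positivity

lemma laurentCoeff_leading (n : ℕ) :
    laurentCoeff n (n + 1) * (2 ^ n * n.factorial) = (2 * n).factorial := by
  induction n using Nat.twoStepInduction with
  | zero => simp [laurentCoeff]
  | one => simp [laurentCoeff]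
  | more n _ ih =>
    rw [laurentCoeff_add_two_succ, laurentCoeff_eq_zero_of_lt n _ (by omega),
      show 2 * (n + 2) = 2 * (n + 1) + 1 + 1 by ring, Nat.factorial_succ (2 * (n + 1) + 1),
      Nat.factorial_succ (2 * (n + 1)), ← ih, Nat.factorial_succ (n + 1)]
    ring

lemma K_eq_sum_range (n : ℕ) {x : ℝ} (hx : x ≠ 0) :
    K n x = (∑ ℓ ∈ Finset.range (n + 2), (laurentCoeff n ℓ : ℝ) / x ^ ℓ) * Real.exp (-x) := by
  induction n using Nat.twoStepInduction with
  | zero =>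
    simp [K, laurentCoeff, Finset.sum_range_succ]
    ring
  | one =>
    simp [K, laurentCoeff, Finset.sum_range_succ]
    ring
  | more n ih₀ ih₁ =>
    have hshift : ∑ ℓ ∈ Finset.range (n + 3), (laurentCoeff n (ℓ + 1) : ℝ) / x ^ (ℓ + 1) =
        ∑ ℓ ∈ Finset.range (n + 2), (laurentCoeff n ℓ : ℝ) / x ^ ℓ := by
      have h := Finset.sum_range_succ' (fun ℓ ↦ (laurentCoeff n ℓ : ℝ) / x ^ ℓ) (n + 3)
      rw [Finset.sum_range_succ, Finset.sum_range_succ,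
        laurentCoeff_eq_zero_of_lt n (n + 2) (by omega),
        laurentCoeff_eq_zero_of_lt n (n + 3) (by omega), laurentCoeff_zero_right] at h
      simpa using h.symm
    have hrec : ∑ ℓ ∈ Finset.range (n + 2 + 2), (laurentCoeff (n + 2) ℓ : ℝ) / x ^ ℓ =
        ∑ ℓ ∈ Finset.range (n + 2), (laurentCoeff n ℓ : ℝ) / x ^ ℓ +
          (2 * (n : ℝ) + 3) / x *
            ∑ ℓ ∈ Finset.range (n + 3), (laurentCoeff (n + 1) ℓ : ℝ) / x ^ ℓ := by
      rw [Finset.sum_range_succ', laurentCoeff_zero_right, Nat.cast_zero, zero_div, add_zero,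
        ← hshift, Finset.mul_sum, ← Finset.sum_add_distrib]
      refine Finset.sum_congr rfl fun ℓ _ ↦ ?_
      rw [laurentCoeff_add_two_succ]
      push_cast
      field_simp
      ring
    rw [K, ih₀, ih₁, hrec]
    ring

/-- For every `n` there is an integer sequence `c` with `c ℓ > 0` for `1 ≤ ℓ ≤ n+1`,
`c 1 = 1` and leading coefficient `c (n+1) = (2n)! / (2^n · n!)` (the double
factorial `(2n-1)!!`), such that for all real `x ≠ 0`,
`k_n(x) = (∑_{ℓ=1}^{n+1} c ℓ / x^ℓ) · exp(-x)`. -/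
theorem K_eq_laurent_exp (n : ℕ) :
    ∃ c : ℕ → ℤ,
      (∀ ℓ : ℕ, 1 ≤ ℓ → ℓ ≤ n + 1 → 0 < c ℓ) ∧
      c 1 = 1 ∧
      (c (n + 1) : ℚ) = ((2 * n).factorial : ℚ) / (2 ^ n * (n.factorial : ℚ)) ∧
      ∀ x : ℝ, x ≠ 0 →
        K n x = (∑ ℓ ∈ Finset.Icc 1 (n + 1), (c ℓ : ℝ) / x ^ ℓ) * Real.exp (-x) := by
  refine ⟨fun ℓ ↦ laurentCoeff n ℓ, fun ℓ h₁ h₂ ↦ ?_, ?_, ?_, fun x hx ↦ ?_⟩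
  · beta_reduce
    exact_mod_cast laurentCoeff_pos n ℓ h₁ h₂
  · simp [laurentCoeff_one_right]
  · rw [eq_div_iff (by positivity)]
    beta_reduce
    exact_mod_cast laurentCoeff_leading n
  · rw [K_eq_sum_range n hx, Finset.range_eq_Ico, Finset.sum_eq_sum_Ico_succ_bot (by omega),
      laurentCoeff_zero_right, ← Finset.Ico_add_one_right_eq_Icc]
    simp [add_assoc]
end

section
/- For every natural number n, the function J n tends, as x tends to 0 along nonzero real values (the punctured neighborhood filter 𝓝[≠] 0), to 1 if n = 0 and to 0 if n ≠ 0. Hence the piecewise definition j_n(0) = 1 for n = 0 and j_n(0) = 0 for n ≠ 0 makes j_n continuous at 0. -/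
open scoped Nat

/-- The coefficient of `x ^ (2 * k + n)` in the power series of `j_n` at `0`. -/
noncomputable def sphericalBesselCoeff (n k : ℕ) : ℝ :=
  (-1) ^ k / (2 ^ k * k ! * (2 * n + 2 * k + 1)‼)

lemma factorial_two_mul_add_one_eq (k : ℕ) :
    ((2 * k + 1)! : ℝ) = 2 ^ k * k ! * (2 * k + 1)‼ := by
  rw [Nat.factorial_eq_mul_doubleFactorial, Nat.doubleFactorial_two_mul]
  push_cast
  ring

lemma sphericalBesselCoeff_zero_left (k : ℕ) :
    sphericalBesselCoeff 0 k = (-1) ^ k / (2 * k + 1)! := by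
  rw [factorial_two_mul_add_one_eq, sphericalBesselCoeff]
  simp

lemma sphericalBesselCoeff_one_left (k : ℕ) :
    sphericalBesselCoeff 1 k =
      (-1) ^ (k + 1) / (2 * (k + 1) + 1)! - (-1) ^ (k + 1) / (2 * (k + 1))! := by
  have hfac : ((2 * (k + 1) + 1)! : ℝ) = (2 * (k + 1) + 1) * (2 * (k + 1))! := by
    rw [Nat.factorial_succ]; push_cast; ring
  have hpos : ((2 * (k + 1))! : ℝ) ≠ 0 := by positivity
  have hodd : (2 * ((k : ℝ) + 1) + 1) ≠ 0 := by positivity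
  have hk : ((k : ℝ) + 1) ≠ 0 := by positivity
  have hcoeff : sphericalBesselCoeff 1 k = (-1) ^ k * (2 * (k + 1)) / (2 * (k + 1) + 1)! := by
    rw [factorial_two_mul_add_one_eq, sphericalBesselCoeff, Nat.factorial_succ,
      show 2 * 1 + 2 * k + 1 = 2 * (k + 1) + 1 by ring]
    have : ((2 * (k + 1) + 1)‼ : ℝ) ≠ 0 := by
      exact_mod_cast (Nat.doubleFactorial_pos _).ne'
    push_cast
    field_simp
    ring
  rw [hcoeff, hfac]
  field_simp
  ring

lemma sphericalBesselCoeff_add_two_left (n k : ℕ) :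
    sphericalBesselCoeff (n + 2) k =
      (2 * (n + 1) + 1) * sphericalBesselCoeff (n + 1) (k + 1)
        - sphericalBesselCoeff n (k + 1) := by
  have hdf : ((2 * n + 2 * (k + 1) + 1)‼ : ℝ) ≠ 0 := by
    exact_mod_cast (Nat.doubleFactorial_pos _).ne'
  have hodd : (2 * (n : ℝ) + 2 * (k + 1) + 1 + 2) ≠ 0 := by positivity
  simp only [sphericalBesselCoeff]
  rw [show 2 * (n + 2) + 2 * k + 1 = (2 * n + 2 * (k + 1) + 1) + 2 by ring,
    show 2 * (n + 1) + 2 * (k + 1) + 1 = (2 * n + 2 * (k + 1) + 1) + 2 by ring,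
    Nat.doubleFactorial_add_two, Nat.factorial_succ]
  push_cast
  field_simp
  ring

lemma sphericalBesselCoeff_succ_left_zero (n : ℕ) :
    (2 * (n + 1) + 1) * sphericalBesselCoeff (n + 1) 0 = sphericalBesselCoeff n 0 := by
  have hdf : ((2 * n + 1)‼ : ℝ) ≠ 0 := by
    exact_mod_cast (Nat.doubleFactorial_pos _).ne'
  have hodd : (2 * (n : ℝ) + 1 + 2) ≠ 0 := by positivity
  simp only [sphericalBesselCoeff]
  rw [show 2 * (n + 1) + 2 * 0 + 1 = (2 * n + 1) + 2 by ring, Nat.doubleFactorial_add_two]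
  push_cast
  field_simp
  ring

lemma abs_sphericalBesselCoeff_le (n k : ℕ) : |sphericalBesselCoeff n k| ≤ 1 / k ! := by
  have hdf : (1 : ℝ) ≤ (2 * n + 2 * k + 1)‼ := by
    exact_mod_cast Nat.doubleFactorial_pos _
  have hpow : (1 : ℝ) ≤ 2 ^ k := one_le_pow₀ (by norm_num)
  have hfac : (0 : ℝ) < k ! := by positivity
  rw [sphericalBesselCoeff, abs_div, abs_pow, abs_neg, abs_one, one_pow,
    abs_of_pos (by positivity)]
  apply one_div_le_one_div_of_le hfac
  calc (k ! : ℝ) = 1 * k ! * 1 := by ring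
    _ ≤ 2 ^ k * k ! * (2 * n + 2 * k + 1)‼ := by gcongr

theorem hasSum_J {x : ℝ} (hx : x ≠ 0) (n : ℕ) :
    HasSum (fun k ↦ sphericalBesselCoeff n k * x ^ (2 * k + n)) (J n x) := by
  induction n using Nat.twoStepInduction with
  | zero =>
    convert (Real.hasSum_sin x).div_const x using 1
    · rfl
    · ext k
      rw [sphericalBesselCoeff_zero_left]
      field_simp
      ring
    · simp [J]
  | one =>
    have h := ((Real.hasSum_sin x).div_const (x ^ 2)).sub ((Real.hasSum_cos x).div_const x)
    convert (hasSum_nat_add_iff' 1).mpr h using 1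
    · rfl
    · ext k
      rw [sphericalBesselCoeff_one_left]
      field_simp
      ring
    · simp [J]
      field_simp
      ring
  | more n ih₀ ih₁ =>
    have h := (ih₁.mul_left ((2 * ((n : ℝ) + 1) + 1) / x)).sub ih₀
    convert (hasSum_nat_add_iff' 1).mpr h using 1
    · rfl
    · ext k
      rw [sphericalBesselCoeff_add_two_left]
      field_simp
      ring
    · rw [J, Finset.sum_range_one, ← sphericalBesselCoeff_succ_left_zero n]
      field_simp
      ring

lemma abs_J_le {x : ℝ} (hx : x ≠ 0) (n : ℕ) : |J n x| ≤ |x| ^ n * Real.exp (x ^ 2) := by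
  have hexp : HasSum (fun k : ℕ ↦ |x| ^ n * ((x ^ 2) ^ k / k !)) (|x| ^ n * Real.exp (x ^ 2)) := by
    rw [Real.exp_eq_exp_ℝ]
    exact (NormedSpace.expSeries_div_hasSum_exp (x ^ 2)).mul_left _
  rw [← (hasSum_J hx n).tsum_eq, ← Real.norm_eq_abs]
  refine tsum_of_norm_bounded hexp fun k ↦ ?_
  rw [Real.norm_eq_abs, abs_mul, abs_pow, pow_add, pow_mul, sq_abs]
  calc |sphericalBesselCoeff n k| * ((x ^ 2) ^ k * |x| ^ n)
      ≤ 1 / k ! * ((x ^ 2) ^ k * |x| ^ n) := by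
        gcongr
        exact abs_sphericalBesselCoeff_le n k
    _ = |x| ^ n * ((x ^ 2) ^ k / k !) := by ring

/-- As `x → 0` along nonzero real values, `j_n(x)` tends to `1` if `n = 0` and to
`0` otherwise; hence setting `j₀(0) = 1` and `j_n(0) = 0` for `n ≠ 0` makes `j_n`
continuous at `0`. -/
theorem J_tendsto_at_zero (n : ℕ) :
    Filter.Tendsto (J n) (nhdsWithin 0 {(0 : ℝ)}ᶜ)
      (nhds (if n = 0 then (1 : ℝ) else 0)) := by
  split_ifs with hn
  · subst hn
    have h := (Real.hasDerivAt_sin 0).tendsto_slope_zero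
    simp only [zero_add, Real.sin_zero, sub_zero, Real.cos_zero, smul_eq_mul] at h
    exact h.congr fun x ↦ by rw [J, div_eq_inv_mul]
  · have hbound : Filter.Tendsto (fun x : ℝ ↦ |x| ^ n * Real.exp (x ^ 2))
        (nhdsWithin 0 {(0 : ℝ)}ᶜ) (nhds 0) := by
      have hcont : Continuous fun x : ℝ ↦ |x| ^ n * Real.exp (x ^ 2) := by fun_prop
      have h := hcont.tendsto 0
      simp only [abs_zero, zero_pow hn, zero_mul] at h
      exact h.mono_left nhdsWithin_le_nhds
    refine squeeze_zero_norm' ?_ hbound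
    filter_upwards [self_mem_nhdsWithin] with x hx
    exact abs_J_le hx n
end

section
/- There exists a unique positive real number x such that sin x = x/2, and this unique positive solution lies in the open interval (π/2, 2). -/
/-- The sine is strictly decreasing on `[π/2, 3π/2]`. -/
theorem strictAntiOn_sin_Icc_pi_div_two :
    StrictAntiOn Real.sin (Set.Icc (Real.pi / 2) (3 * Real.pi / 2)) := by
  intro x hx y hy hxy
  rw [← Real.sin_pi_sub x, ← Real.sin_pi_sub y]
  exact Real.sin_lt_sin_of_lt_of_le_pi_div_two (by linarith [hy.2]) (by linarith [hx.1])
    (by linarith)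

theorem sin_two_lt_one : Real.sin 2 < 1 := by
  nlinarith [Real.sin_sq_add_cos_sq 2, Real.cos_two_neg, Real.sin_le_one 2]

theorem mem_Ioo_of_sin_eq_half {x : ℝ} (hx : 0 < x) (h : Real.sin x = x / 2) :
    x ∈ Set.Ioo (Real.pi / 2) 2 := by
  constructor
  · by_contra! hle
    have jordan := Real.mul_le_sin hx.le hle
    have slope : 1 / 2 < 2 / Real.pi := by
      rw [div_lt_div_iff₀ two_pos Real.pi_pos]
      linarith [Real.pi_lt_four]
    nlinarith
  · refine lt_of_le_of_ne (by linarith [Real.sin_le_one x]) ?_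
    rintro rfl
    linarith [sin_two_lt_one]

/-- There exists a unique positive real `x` with `sin x = x/2`, and this unique
positive solution lies in the open interval `(π/2, 2)` (OEIS A199460). -/
theorem sin_eq_half_x_unique_pos :
    (∃! x : ℝ, 0 < x ∧ Real.sin x = x / 2) ∧
    ∀ x : ℝ, 0 < x → Real.sin x = x / 2 → x ∈ Set.Ioo (Real.pi / 2) 2 := by
  refine ⟨?_, fun x hx h => mem_Ioo_of_sin_eq_half hx h⟩
  have hpi := Real.pi_gt_three
  refine existsUnique_of_exists_of_unique ?_ ?_
  · have hcont : ContinuousOn (fun x : ℝ => Real.sin x - x / 2) (Set.Icc (Real.pi / 2) 2) := by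
      fun_prop
    obtain ⟨x, hx, h⟩ := intermediate_value_Icc' (by linarith [Real.pi_lt_four]) hcont
      (show (0 : ℝ) ∈ Set.Icc _ _ from
        ⟨by linarith [sin_two_lt_one], by
          rw [Real.sin_pi_div_two]
          linarith [Real.pi_lt_four]⟩)
    exact ⟨x, by linarith [hx.1], sub_eq_zero.mp h⟩
  · rintro x y ⟨hx, hsx⟩ ⟨hy, hsy⟩
    have mem_Icc {z : ℝ} (hz : 0 < z) (h : Real.sin z = z / 2) :
        z ∈ Set.Icc (Real.pi / 2) (3 * Real.pi / 2) := by
      have := mem_Ioo_of_sin_eq_half hz h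
      exact ⟨this.1.le, by linarith [this.2]⟩
    have hxm := mem_Icc hx hsx
    have hym := mem_Icc hy hsy
    rcases lt_trichotomy x y with hlt | heq | hlt
    · linarith [strictAntiOn_sin_Icc_pi_div_two hxm hym hlt]
    · exact heq
    · linarith [strictAntiOn_sin_Icc_pi_div_two hym hxm hlt]
end

section
/- For every real constant c with c ≥ 1 there exists a unique real number x such that cos x = c · x, and this unique solution lies in the half-open interval (0, 1/c]. -/
/-- Any solution of `cos x = c * x` with `1 ≤ c` lies in `(0, 1 / c]`. -/
theorem mem_Ioc_of_cos_eq_mul {c x : ℝ} (hc : 1 ≤ c) (h : Real.cos x = c * x) :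
    x ∈ Set.Ioc 0 (1 / c) := by
  have hc0 : 0 < c := by linarith
  have hx : |x| ≤ 1 := by
    have hcx : c * |x| ≤ 1 := by
      simpa only [h, abs_mul, abs_of_pos hc0] using Real.abs_cos_le_one x
    nlinarith [abs_nonneg x]
  have hpos : 0 < c * x := h ▸ Real.cos_pos_of_le_one hx
  refine ⟨pos_of_mul_pos_right hpos hc0.le, ?_⟩
  rw [le_div_iff₀' hc0, ← h]
  exact Real.cos_le_one x

/-- For every real `c ≥ 1` there exists a unique real `x` such that
`cos x = c·x` (the generalized Dottie equation), and this unique solution lies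
in the half-open interval `(0, 1/c]`. -/
theorem generalized_dottie_unique (c : ℝ) (hc : 1 ≤ c) :
    (∃! x : ℝ, Real.cos x = c * x) ∧
    ∀ x : ℝ, Real.cos x = c * x → x ∈ Set.Ioc 0 (1 / c) := by
  refine ⟨?_, fun x => mem_Ioc_of_cos_eq_mul hc⟩
  have hc0 : 0 < c := by linarith
  have hle : 1 / c ≤ Real.pi := by
    have : 1 / c ≤ 1 := (div_le_one hc0).2 hc
    linarith [Real.pi_gt_three]
  have hmem : (0 : ℝ) ∈ Set.Icc (Real.cos (1 / c) - c * (1 / c)) (Real.cos 0 - c * 0) := by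
    rw [mul_one_div_cancel hc0.ne', Real.cos_zero]
    constructor <;> linarith [Real.cos_le_one (1 / c)]
  obtain ⟨x, -, hx⟩ := intermediate_value_Icc' (f := fun t => Real.cos t - c * t)
    (by positivity : (0 : ℝ) ≤ 1 / c) (by fun_prop) hmem
  have hx : Real.cos x = c * x := sub_eq_zero.1 hx
  have hanti : StrictAntiOn (fun t => Real.cos t - c * t) (Set.Icc 0 Real.pi) := by
    intro a ha b hb hab
    have hcos := Real.strictAntiOn_cos ha hb hab
    have hmul := mul_lt_mul_of_pos_left hab hc0
    simp only
    linarith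
  have hIcc {y : ℝ} (hy : Real.cos y = c * y) : y ∈ Set.Icc 0 Real.pi :=
    have h := mem_Ioc_of_cos_eq_mul hc hy
    ⟨h.1.le, h.2.trans hle⟩
  refine ⟨x, hx, fun y hy => hanti.injOn (hIcc hy) (hIcc hx) ?_⟩
  simp only [hx, hy, sub_self]
end

section
/- Define g : ℝ → ℝ by g x = cosh x / x - sinh x / x² for x ≠ 0 and g 0 = 0 (the modified spherical Bessel function i₁ extended continuously to 0). Then g is strictly monotone increasing on ℝ and surjective onto ℝ; consequently, for every real constant c₀ the equation cosh x / x - sinh x / x² = c₀ (together with the value 0 at x = 0) has exactly one real solution. -/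
open Real

/-- The modified spherical Bessel function `i₁` extended continuously to `0`. -/
noncomputable def g : ℝ → ℝ :=
  fun x => if x = 0 then 0 else Real.cosh x / x - Real.sinh x / x ^ 2

open Set Filter Topology

/-- A function vanishing at `0` whose derivative is positive on `(0, ∞)` is positive there. -/
theorem pos_of_hasDerivAt_pos {f f' : ℝ → ℝ} (h0 : f 0 = 0)
    (hf : ∀ x, HasDerivAt f (f' x) x) (hf' : ∀ x, 0 < x → 0 < f' x) {x : ℝ} (hx : 0 < x) :
    0 < f x := by
  have hmono : StrictMonoOn f (Ici 0) := by
    refine strictMonoOn_of_deriv_pos (convex_Ici 0)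
      (fun y _ => (hf y).continuousAt.continuousWithinAt) fun y hy => ?_
    rw [interior_Ici] at hy
    rw [(hf y).deriv]
    exact hf' y hy
  simpa [h0] using hmono (mem_Ici.2 le_rfl) (mem_Ici.2 hx.le) hx

theorem cube_div_three_lt_mul_cosh_sub_sinh {x : ℝ} (hx : 0 < x) :
    x ^ 3 / 3 < x * cosh x - sinh x := by
  have h := pos_of_hasDerivAt_pos (f := fun x => x * cosh x - sinh x - x ^ 3 / 3)
    (f' := fun x => x * (sinh x - x)) (by simp)
    (fun x => by
      have := (((hasDerivAt_id x).mul (hasDerivAt_cosh x)).sub (hasDerivAt_sinh x)).sub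
        (((hasDerivAt_id x).pow 3).div_const 3)
      refine this.congr_deriv ?_
      simp
      ring)
    (fun x hx => mul_pos hx (sub_pos.2 (self_lt_sinh_iff.2 hx))) hx
  simpa using h

theorem mul_cosh_sub_sinh_lt_sq_mul_sinh {x : ℝ} (hx : 0 < x) :
    x * cosh x - sinh x < x ^ 2 * sinh x := by
  have h := pos_of_hasDerivAt_pos (f := fun x => x ^ 2 * sinh x - (x * cosh x - sinh x))
    (f' := fun x => x * sinh x + x ^ 2 * cosh x) (by simp)
    (fun x => by
      have := (((hasDerivAt_id x).pow 2).mul (hasDerivAt_sinh x)).sub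
        (((hasDerivAt_id x).mul (hasDerivAt_cosh x)).sub (hasDerivAt_sinh x))
      refine this.congr_deriv ?_
      simp
      ring)
    (fun x hx => by
      have := sinh_pos_iff.2 hx
      have := cosh_pos x
      positivity) hx
  simpa using h

theorem sq_mul_sinh_sub_two_mul_cosh_add_two_sinh_pos {x : ℝ} (hx : 0 < x) :
    0 < x ^ 2 * sinh x - 2 * (x * cosh x) + 2 * sinh x :=
  pos_of_hasDerivAt_pos (f := fun x => x ^ 2 * sinh x - 2 * (x * cosh x) + 2 * sinh x)
    (f' := fun x => x ^ 2 * cosh x) (by simp)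
    (fun x => by
      have := ((((hasDerivAt_id x).pow 2).mul (hasDerivAt_sinh x)).sub
        (((hasDerivAt_id x).mul (hasDerivAt_cosh x)).const_mul 2)).add
          ((hasDerivAt_sinh x).const_mul 2)
      refine this.congr_deriv ?_
      simp
      ring)
    (fun x hx => mul_pos (pow_pos hx 2) (cosh_pos x)) hx

theorem g_zero : g 0 = 0 := by simp [g]

theorem g_neg (x : ℝ) : g (-x) = -g x := by
  by_cases hx : x = 0
  · simp [g, hx]
  · simp only [g, neg_eq_zero, hx, if_false, cosh_neg, sinh_neg, neg_sq]
    ring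

theorem g_eq_div {x : ℝ} (hx : x ≠ 0) : g x = (x * cosh x - sinh x) / x ^ 2 := by
  simp only [g, hx, if_false]
  field_simp

theorem div_three_lt_g {x : ℝ} (hx : 0 < x) : x / 3 < g x := by
  rw [g_eq_div hx.ne', lt_div_iff₀ (pow_pos hx 2)]
  linarith [cube_div_three_lt_mul_cosh_sub_sinh hx, show x / 3 * x ^ 2 = x ^ 3 / 3 by ring]

theorem g_lt_sinh {x : ℝ} (hx : 0 < x) : g x < sinh x := by
  rw [g_eq_div hx.ne', div_lt_iff₀ (pow_pos hx 2), mul_comm (sinh x)]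
  exact mul_cosh_sub_sinh_lt_sq_mul_sinh hx

theorem hasDerivAt_g {x : ℝ} (hx : x ≠ 0) :
    HasDerivAt g ((x ^ 2 * sinh x - 2 * (x * cosh x) + 2 * sinh x) / x ^ 3) x := by
  have h := ((hasDerivAt_cosh x).div (hasDerivAt_id x) hx).sub
    ((hasDerivAt_sinh x).div ((hasDerivAt_id x).pow 2) (pow_ne_zero 2 hx))
  refine (h.congr_of_eventuallyEq ?_).congr_deriv ?_
  · filter_upwards [isOpen_ne.mem_nhds hx] with y hy
    simp [g, show y ≠ 0 from hy]
  · simp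
    field_simp
    ring

theorem continuousOn_g : ContinuousOn g (Ici 0) := by
  intro x hx
  rcases (mem_Ici.1 hx).eq_or_lt with rfl | hx
  · have hsinh : Tendsto sinh (𝓝[Ici 0] 0) (𝓝 0) := by
      simpa using (continuous_sinh.tendsto 0).mono_left nhdsWithin_le_nhds
    rw [ContinuousWithinAt, g_zero]
    refine tendsto_of_tendsto_of_tendsto_of_le_of_le' tendsto_const_nhds hsinh ?_ ?_ <;>
      filter_upwards [self_mem_nhdsWithin] with y hy <;>
      rcases (mem_Ici.1 hy).eq_or_lt with rfl | hy
    · exact g_zero.ge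
    · linarith [div_three_lt_g hy]
    · simp [g_zero]
    · exact (g_lt_sinh hy).le
  · exact (hasDerivAt_g hx.ne').continuousAt.continuousWithinAt

theorem strictMono_g : StrictMono g := by
  refine strictMono_of_odd_strictMonoOn_nonneg g_neg
    (strictMonoOn_of_deriv_pos (convex_Ici 0) continuousOn_g fun x hx => ?_)
  rw [interior_Ici, mem_Ioi] at hx
  rw [(hasDerivAt_g hx.ne').deriv]
  exact div_pos (sq_mul_sinh_sub_two_mul_cosh_add_two_sinh_pos hx) (pow_pos hx 3)

theorem exists_g_eq_of_nonneg {c : ℝ} (hc : 0 ≤ c) : ∃ x, g x = c := by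
  rcases hc.eq_or_lt with rfl | hc
  · exact ⟨0, g_zero⟩
  have hb : 0 < 3 * c := by positivity
  have hgb : c ≤ g (3 * c) := by linarith [div_three_lt_g hb]
  obtain ⟨x, -, hx⟩ := intermediate_value_Icc hb.le (continuousOn_g.mono Icc_subset_Ici_self)
    ⟨g_zero.trans_le hc.le, hgb⟩
  exact ⟨x, hx⟩

theorem surjective_g : Function.Surjective g := by
  intro c
  rcases le_total 0 c with hc | hc
  · exact exists_g_eq_of_nonneg hc
  · obtain ⟨x, hx⟩ := exists_g_eq_of_nonneg (neg_nonneg.2 hc)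
    exact ⟨-x, by rw [g_neg, hx, neg_neg]⟩

/-- `g` (the modified spherical Bessel function `i₁`, extended by `g 0 = 0`) is
strictly monotone increasing on `ℝ` and surjective onto `ℝ`; consequently for
every real `c₀` the equation `i₁(x) = c₀` has exactly one real solution. -/
theorem i1_strictMono_surjective_unique_solution :
    StrictMono g ∧ Function.Surjective g ∧ ∀ c₀ : ℝ, ∃! x : ℝ, g x = c₀ := by
  exact ⟨strictMono_g, surjective_g, Function.bijective_iff_existsUnique g |>.1
    ⟨strictMono_g.injective, surjective_g⟩⟩
end
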